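/- arXiv:1906.04227 — 2 statements merged into one kernel-verified Lean document; each statement's English description precedes it below -/
import Mathlib

section
/- Fix an integer n ≥ 2 and let H = ℤ[1/n] with α(x) = n·x. If Q ⊆ H is a symmetric subset confining for H under the action of α, then there exists k ≥ 0 such that n^k·a ∈ S(L(Q)) for every a ∈ Q (that is, Q ⊆ α^{-k}(S(L(Q)))). -/
/-- `x ∈ H = ℤ[1/n]`: `x` is a rational of the form `a / n^k`. -/
def inH (n : ℕ) (x : ℚ) : Prop := ∃ (a : ℤ) (k : ℕ), x = (a : ℚ) / (n : ℚ) ^ k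

/-- A subset of `ℚ` is symmetric if it is closed under negation. -/
def IsSymmSet (Q : Set ℚ) : Prop := ∀ x ∈ Q, -x ∈ Q

/-- `Q ⊆ H` is confining for `H = ℤ[1/n]` under the action of `α : x ↦ n·x`. -/
def Confining (n : ℕ) (Q : Set ℚ) : Prop :=
  (∀ x ∈ Q, inH n x) ∧
  (∀ x ∈ Q, (n : ℚ) * x ∈ Q) ∧
  (∀ x : ℚ, inH n x → ∃ k : ℕ, (n : ℚ) ^ k * x ∈ Q) ∧
  (∃ k₀ : ℕ, ∀ x ∈ Q, ∀ y ∈ Q, (n : ℚ) ^ k₀ * (x + y) ∈ Q)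

/-- Membership in `ℤ_n`, realized as the inverse limit of the rings `ℤ/n^lℤ` inside
the product ring `∀ l, ℤ/n^lℤ`: the coordinates are compatible under reduction. -/
def ZnMem (n : ℕ) (x : ∀ l : ℕ, ZMod (n ^ l)) : Prop :=
  ∀ (k l : ℕ) (h : k ≤ l), ZMod.castHom (pow_dvd_pow n h) (ZMod (n ^ k)) (x l) = x k

/-- `I` is an ideal of `ℤ_n`: a subset of `ℤ_n` containing `0`, closed under addition
and under multiplication by arbitrary elements of `ℤ_n`. -/
def IsZnIdeal (n : ℕ) (I : Set (∀ l : ℕ, ZMod (n ^ l))) : Prop :=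
  (∀ x ∈ I, ZnMem n x) ∧ (0 ∈ I) ∧ (∀ x ∈ I, ∀ y ∈ I, x + y ∈ I) ∧
  (∀ r, ZnMem n r → ∀ x ∈ I, r * x ∈ I)

/-- The set `L(Q) ⊆ ℤ_n`: those `x ∈ ℤ_n` such that for every `t ≥ 1` there is a
nonnegative `a ∈ Q` whose fractional part equals `v_t(x)/n^t`. -/
def LSet (n : ℕ) (Q : Set ℚ) : Set (∀ l : ℕ, ZMod (n ^ l)) :=
  {x | ZnMem n x ∧ ∀ t : ℕ, 1 ≤ t →
    ∃ a ∈ Q, 0 ≤ a ∧ Int.fract a = ((x t).val : ℚ) / (n : ℚ) ^ t}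

/-- The set `S(𝔟) ⊆ H = ℤ[1/n]` associated to a subset `𝔟 ⊆ ℤ_n`: those `x ∈ H`
such that for some `s ≥ 0` with `n^s·x ∈ ℤ` there is `b ∈ 𝔟` with the fractional
part of `|x|` equal to `v_s(b)/n^s`. -/
def SIdeal (n : ℕ) (I : Set (∀ l : ℕ, ZMod (n ^ l))) : Set ℚ :=
  {x | inH n x ∧ ∃ s : ℕ, (∃ m : ℤ, (n : ℚ) ^ s * x = (m : ℚ)) ∧
    ∃ b ∈ I, Int.fract |x| = ((b s).val : ℚ) / (n : ℚ) ^ s}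

/-!
Primes dividing the denominators of `Q` to unbounded order behave differently from the others. Let
`v` collect the prime powers of `n` at the former primes and `u` those at the latter, so that
`n = u * v`. Multiplying by a fixed power of `n` clears the `u`-part of every denominator, hence
moves `Q` into `ℤ[1/v]`. Conversely, for a prime `p ∣ v` the set `Q` contains rationals with
denominator divisible by any given `p ^ r`, and such a rational has multiples congruent modulo `ℤ`
to every element of `p⁻ʳℤ`. A fixed power of `n` moves all multiples of elements of `Q` into `Q`,
and elements of `ℤ[1/v]` are sums of elements of the `ℤ[1/p]`, so a fixed power of `n` moves
`ℤ[1/v]` into `Q`.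

It remains to see that `y ∈ ℤ[1/v]` lies in `S(L(Q))`. Let `n ^ s * y ∈ ℤ` and let `e` be the
idempotent of `ℤ_n = ℤ_u × ℤ_v` that is `0` in `ℤ_u` and `1` in `ℤ_v`. The `n`-adic integer
`b = n ^ s * |y| * e` agrees with `n ^ s * |y|` modulo `n ^ s`, and every `v_t(b) / n ^ t` lies in
`ℤ[1/v]`. If `n ^ K` moves `ℤ[1/v]` into `Q`, then `n ^ K * (v_{t+K}(b) / n ^ (t + K))` is an
element of `Q` congruent to `v_t(b) / n ^ t` modulo `ℤ`, so `b ∈ L(Q)`.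
-/

section Absorption

open scoped Pointwise

/-- The preorder used to compare confining subsets: some iterate of `α : x ↦ n * x` maps `X`
into `Y`. -/
def AbsorbedBy (n : ℕ) (X Y : Set ℚ) : Prop := ∃ k : ℕ, ∀ x ∈ X, (n : ℚ) ^ k * x ∈ Y

variable {n : ℕ} {Q X X' Y Y' : Set ℚ}

theorem AbsorbedBy.mono_left (h : AbsorbedBy n X Y) (hX : X' ⊆ X) : AbsorbedBy n X' Y :=
  h.imp fun _ hk x hx => hk x (hX hx)

theorem AbsorbedBy.mono_right (h : AbsorbedBy n X Y) (hY : Y ⊆ Y') : AbsorbedBy n X Y' :=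
  h.imp fun _ hk x hx => hY (hk x hx)

namespace Confining

theorem pow_mul_mem (hQ : Confining n Q) (k : ℕ) {x : ℚ} (hx : x ∈ Q) : (n : ℚ) ^ k * x ∈ Q := by
  induction k with
  | zero => simpa using hx
  | succ k ih => simpa only [pow_succ', mul_assoc] using hQ.2.1 _ ih

theorem pow_mul_mem_of_le (hQ : Confining n Q) {i j : ℕ} (hij : i ≤ j) {x : ℚ}
    (hx : (n : ℚ) ^ i * x ∈ Q) : (n : ℚ) ^ j * x ∈ Q := by
  simpa only [← mul_assoc, ← pow_add, Nat.sub_add_cancel hij] using hQ.pow_mul_mem (j - i) hx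

theorem zero_mem (hQ : Confining n Q) : (0 : ℚ) ∈ Q := by
  obtain ⟨k, hk⟩ := hQ.2.2.1 0 ⟨0, 0, by simp⟩
  simpa using hk

theorem absorbedBy_add (hQ : Confining n Q) (hX : AbsorbedBy n X Q) (hY : AbsorbedBy n Y Q) :
    AbsorbedBy n (X + Y) Q := by
  obtain ⟨i, hi⟩ := hX
  obtain ⟨j, hj⟩ := hY
  obtain ⟨k, hk⟩ := hQ.2.2.2
  refine ⟨k + max i j, ?_⟩
  rintro _ ⟨x, hx, y, hy, rfl⟩
  have hsum := hk _ (hQ.pow_mul_mem_of_le (le_max_left i j) (hi x hx)) _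
    (hQ.pow_mul_mem_of_le (le_max_right i j) (hj y hy))
  rwa [← mul_add, ← mul_assoc, ← pow_add] at hsum

theorem exists_pow_mul_natCast_mul_mem_of_le (hQ : Confining n Q) (D : ℕ) :
    ∃ e : ℕ, ∀ d ≤ D, ∀ a ∈ Q, (n : ℚ) ^ e * (d * a) ∈ Q := by
  obtain ⟨k, hk⟩ := hQ.2.2.2
  induction D with
  | zero => exact ⟨0, fun d hd a _ => by simpa [Nat.le_zero.mp hd] using hQ.zero_mem⟩
  | succ D ih =>
    obtain ⟨e, he⟩ := ih
    refine ⟨k + e, fun d hd a ha => ?_⟩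
    rcases d with _ | d
    · simpa using hQ.zero_mem
    · convert hk _ (he d (by lia) a ha) _ (hQ.pow_mul_mem e ha) using 1
      push_cast
      ring

/-- The exponent is uniform because the base-`n ^ k` digits of `m` are bounded: if `n ^ k` moves
sums into `Q`, Horner's scheme adds the digits one at a time, each step costing the factor `n ^ k`
that the place value supplies. -/
theorem absorbedBy_natCast_mul (hQ : Confining n Q) (hn : 2 ≤ n) :
    AbsorbedBy n (Set.range (Nat.cast : ℕ → ℚ) * Q) Q := by
  obtain ⟨k₀, hk₀⟩ := hQ.2.2.2
  obtain ⟨k, hk_pos, hk⟩ : ∃ k, k ≠ 0 ∧ ∀ x ∈ Q, ∀ y ∈ Q, (n : ℚ) ^ k * (x + y) ∈ Q :=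
    ⟨k₀ + 1, k₀.succ_ne_zero, fun x hx y hy => hQ.pow_mul_mem_of_le k₀.le_succ (hk₀ x hx y hy)⟩
  obtain ⟨e, he⟩ := hQ.exists_pow_mul_natCast_mul_mem_of_le (n ^ k)
  have hbase : 1 < n ^ k := Nat.one_lt_pow hk_pos hn
  refine ⟨k + e, ?_⟩
  rintro _ ⟨_, ⟨m, rfl⟩, a, ha, rfl⟩
  induction m using Nat.strong_induction_on with
  | _ m ih =>
    rcases Nat.eq_zero_or_pos m with rfl | hm
    · simpa using hQ.zero_mem
    · have hdigit := he (m % n ^ k) (Nat.mod_lt _ (by lia)).le a ha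
      have hrest := ih (m / n ^ k) (Nat.div_lt_self hm hbase)
      have hm_eq : (m : ℚ) = (m % n ^ k : ℕ) + (n : ℚ) ^ k * (m / n ^ k : ℕ) := by
        exact_mod_cast (Nat.mod_add_div m (n ^ k)).symm
      convert hk _ hdigit _ hrest using 1
      rw [hm_eq]
      ring

theorem absorbedBy_intCast (hQ : Confining n Q) (hn : 2 ≤ n) :
    AbsorbedBy n (Set.range (Int.cast : ℤ → ℚ)) Q := by
  obtain ⟨e, he⟩ := hQ.absorbedBy_natCast_mul hn
  obtain ⟨i, hi⟩ := hQ.2.2.1 1 ⟨1, 0, by simp⟩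
  obtain ⟨j, hj⟩ := hQ.2.2.1 (-1) ⟨-1, 0, by simp⟩
  refine ⟨e + max i j, ?_⟩
  rintro _ ⟨z, rfl⟩
  have hnat (m : ℕ) {q : ℚ} (hq : (n : ℚ) ^ max i j * q ∈ Q) :
      (n : ℚ) ^ (e + max i j) * (m * q) ∈ Q := by
    convert he _ (Set.mul_mem_mul ⟨m, rfl⟩ hq) using 1
    ring
  obtain ⟨m, rfl | rfl⟩ := z.eq_nat_or_neg
  · simpa using hnat m (hQ.pow_mul_mem_of_le (le_max_left i j) hi)
  · simpa using hnat m (hQ.pow_mul_mem_of_le (le_max_right i j) hj)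

end Confining

end Absorption

section Denominators

open scoped Pointwise

variable {n u v : ℕ} {Q : Set ℚ}

theorem exists_natCast_mul_add_intCast_eq_div {a : ℚ} {d : ℕ} (hd : d ∣ a.den) (w : ℤ) :
    ∃ (m : ℕ) (j : ℤ), (m : ℚ) * a + j = w / d := by
  obtain ⟨c, hc⟩ := hd
  obtain ⟨x, y, hxy⟩ : IsCoprime a.num a.den := by
    simpa [Int.isCoprime_iff_nat_coprime] using a.reduced
  obtain ⟨m, -, hm⟩ := Int.existsUnique_equiv_nat (w * c * x) (Int.natCast_pos.mpr a.den_pos)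
  have hmod : m * a.num ≡ w * c [ZMOD a.den] :=
    calc m * a.num ≡ w * c * x * a.num [ZMOD a.den] := hm.mul_right _
      _ ≡ w * c [ZMOD a.den] :=
        Int.modEq_iff_dvd.mpr ⟨w * c * y, by linear_combination -(w * c : ℤ) * hxy⟩
  obtain ⟨j, hj⟩ := hmod.dvd
  have hdc : (d * c : ℚ) ≠ 0 := by exact_mod_cast hc ▸ a.den_nz
  have hden : (a.den : ℚ) = d * c := by exact_mod_cast hc
  have hjQ : (w * c - m * a.num : ℚ) = d * c * j := by
    rw [← hden]
    exact_mod_cast hj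
  have hnum : a * (d * c) = a.num := hden ▸ Rat.mul_den_eq_num a
  refine ⟨m, j, ?_⟩
  rw [eq_div_iff (left_ne_zero_of_mul hdc)]
  apply mul_right_cancel₀ (right_ne_zero_of_mul hdc)
  linear_combination (m : ℚ) * hnum - hjQ

theorem setOf_inH_subset_of_forall_pow_dvd_den (hv : ∀ r, ∃ a ∈ Q, v ^ r ∣ a.den) :
    {x | inH v x} ⊆ Set.range (Nat.cast : ℕ → ℚ) * Q + Set.range (Int.cast : ℤ → ℚ) := by
  rintro _ ⟨w, r, rfl⟩
  obtain ⟨a, ha, hdvd⟩ := hv r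
  obtain ⟨m, j, hmj⟩ := exists_natCast_mul_add_intCast_eq_div hdvd w
  rw [← Nat.cast_pow, ← hmj]
  exact Set.add_mem_add (Set.mul_mem_mul ⟨m, rfl⟩ ha) ⟨j, rfl⟩

theorem setOf_inH_mul_subset (hu : u ≠ 0) (hv : v ≠ 0) (huv : u.Coprime v) :
    {x | inH (u * v) x} ⊆ {x | inH u x} + {x | inH v x} := by
  rintro _ ⟨w, r, rfl⟩
  obtain ⟨x, y, hxy⟩ : IsCoprime ((u : ℤ) ^ r) ((v : ℤ) ^ r) :=
    (Nat.isCoprime_iff_coprime.mpr huv).pow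
  have hxyQ : (x : ℚ) * u ^ r + y * v ^ r = 1 := by exact_mod_cast hxy
  refine ⟨_, ⟨w * y, r, rfl⟩, _, ⟨w * x, r, rfl⟩, ?_⟩
  push_cast [mul_pow]
  field_simp
  linear_combination (w : ℚ) * hxyQ

theorem inH.fract (hv : v ≠ 0) {x : ℚ} (hx : inH v x) : inH v (Int.fract x) := by
  obtain ⟨w, r, rfl⟩ := hx
  refine ⟨w - ⌊(w : ℚ) / v ^ r⌋ * v ^ r, r, ?_⟩
  rw [Int.fract]
  push_cast
  field_simp

/-- The `u`-parts of the denominators of the elements of `Q` are bounded; the `u`-part of `d` is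
encoded as `gcd(d, u ^ t)` for large `t`. -/
def BoundedDenPart (u : ℕ) (Q : Set ℚ) : Prop := ∃ R : ℕ, ∀ a ∈ Q, ∀ t, a.den.gcd (u ^ t) ∣ u ^ R

theorem boundedDenPart_one (Q : Set ℚ) : BoundedDenPart 1 Q := ⟨0, by simp⟩

theorem BoundedDenPart.mul (hu : BoundedDenPart u Q) (hv : BoundedDenPart v Q)
    (huv : u.Coprime v) : BoundedDenPart (u * v) Q := by
  obtain ⟨R, hR⟩ := hu
  obtain ⟨S, hS⟩ := hv
  refine ⟨max R S, fun a ha t => ?_⟩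
  rw [mul_pow, mul_pow, (huv.pow t t).gcd_mul]
  exact mul_dvd_mul ((hR a ha t).trans (pow_dvd_pow u (le_max_left R S)))
    ((hS a ha t).trans (pow_dvd_pow v (le_max_right R S)))

theorem boundedDenPart_prime_pow_or_forall_pow_dvd_den {p : ℕ} (hp : p.Prime) (k : ℕ)
    (Q : Set ℚ) : BoundedDenPart (p ^ k) Q ∨ ∀ r, ∃ a ∈ Q, (p ^ k) ^ r ∣ a.den := by
  by_cases hunbounded : ∀ r, ∃ a ∈ Q, (p ^ k) ^ r ∣ a.den
  · exact .inr hunbounded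
  · push Not at hunbounded
    obtain ⟨R, hR⟩ := hunbounded
    refine .inl ⟨R, fun a ha t => ?_⟩
    have hgcd_dvd : a.den.gcd ((p ^ k) ^ t) ∣ p ^ (k * t) := pow_mul p k t ▸ Nat.gcd_dvd_right _ _
    obtain ⟨j, -, hj⟩ := (Nat.dvd_prime_pow hp).mp hgcd_dvd
    have hj_dvd : p ^ j ∣ a.den := hj ▸ Nat.gcd_dvd_left _ _
    simp only [← pow_mul] at hR
    rw [hj, ← pow_mul]
    exact pow_dvd_pow p (le_of_not_gt fun hlt => hR a ha <| (pow_dvd_pow p hlt.le).trans hj_dvd)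

theorem inH.den_dvd_pow {x : ℚ} (hx : inH n x) : ∃ i, x.den ∣ n ^ i := by
  obtain ⟨w, i, rfl⟩ := hx
  refine ⟨i, ?_⟩
  have hdvd := Rat.den_dvd w ((n : ℤ) ^ i)
  rw [Rat.divInt_eq_div] at hdvd
  exact_mod_cast hdvd

theorem BoundedDenPart.absorbedBy (hQ : BoundedDenPart u Q) (hv : v ≠ 0) (huv : u.Coprime v)
    (hH : ∀ a ∈ Q, inH (u * v) a) : AbsorbedBy (u * v) Q {x | inH v x} := by
  obtain ⟨R, hR⟩ := hQ
  refine ⟨R, fun a ha => ?_⟩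
  obtain ⟨i, hi⟩ := (hH a ha).den_dvd_pow
  have hden : a.den ∣ u ^ R * v ^ i := by
    rw [← Nat.gcd_eq_left hi, mul_pow, (huv.pow i i).gcd_mul]
    exact mul_dvd_mul (hR a ha i) (Nat.gcd_dvd_right _ _)
  obtain ⟨c, hc⟩ := hden
  have hcQ : (u : ℚ) ^ R * v ^ i = a.den * c := by exact_mod_cast hc
  have hnum : a * a.den = a.num := Rat.mul_den_eq_num a
  refine ⟨v ^ R * a.num * c, i, ?_⟩
  rw [eq_div_iff (by positivity)]
  push_cast [mul_pow]
  linear_combination ((v : ℚ) ^ R * a) * hcQ + ((v : ℚ) ^ R * c) * hnum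

theorem Confining.exists_coprime_factorization (hQ : Confining n Q) (hn : 2 ≤ n) {N : ℕ}
    (hN : N ≠ 0) : ∃ u v : ℕ, u.Coprime v ∧ u * v = N ∧
      BoundedDenPart u Q ∧ AbsorbedBy n {x | inH v x} Q := by
  have habsorbed_of_unbounded {v : ℕ} (hv : ∀ r, ∃ a ∈ Q, v ^ r ∣ a.den) :
      AbsorbedBy n {x | inH v x} Q :=
    (hQ.absorbedBy_add (hQ.absorbedBy_natCast_mul hn) (hQ.absorbedBy_intCast hn)).mono_left
      (setOf_inH_subset_of_forall_pow_dvd_den hv)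
  have habsorbed_one : AbsorbedBy n {x | inH 1 x} Q :=
    habsorbed_of_unbounded fun _ => ⟨0, hQ.zero_mem, by simp⟩
  induction N using Nat.recOnPosPrimePosCoprime with
  | zero => exact absurd rfl hN
  | one => exact ⟨1, 1, by simp, by simp, boundedDenPart_one Q, habsorbed_one⟩
  | prime_pow p k hp _ =>
    rcases boundedDenPart_prime_pow_or_forall_pow_dvd_den hp k Q with hbounded | hunbounded
    · exact ⟨p ^ k, 1, by simp, by simp, hbounded, habsorbed_one⟩
    · exact ⟨1, p ^ k, by simp, by simp, boundedDenPart_one Q, habsorbed_of_unbounded hunbounded⟩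
  | coprime a b _ _ hab iha ihb =>
    obtain ⟨ua, va, hcopa, rfl, hua, hva⟩ := iha (left_ne_zero_of_mul hN)
    obtain ⟨ub, vb, hcopb, rfl, hub, hvb⟩ := ihb (right_ne_zero_of_mul hN)
    simp only [ne_eq, mul_eq_zero, not_or] at hN
    simp only [Nat.coprime_mul_iff_left, Nat.coprime_mul_iff_right] at hab
    obtain ⟨⟨huu, hvu⟩, huv, hvv⟩ := hab
    refine ⟨ua * ub, va * vb, ?_, mul_mul_mul_comm _ _ _ _, hua.mul hub huu,
      (hQ.absorbedBy_add hva hvb).mono_left (setOf_inH_mul_subset hN.1.2 hN.2.2 hvv)⟩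
    simp only [Nat.coprime_mul_iff_left, Nat.coprime_mul_iff_right]
    exact ⟨⟨hcopa, hvu.symm⟩, huv, hcopb⟩

end Denominators

section AdicIntegers

variable {n : ℕ} {Q X : Set ℚ}

theorem val_intCast_div_pow_eq_fract (hn : n ≠ 0) (z : ℤ) (t : ℕ) :
    ((z : ZMod (n ^ t)).val : ℚ) / (n : ℚ) ^ t = Int.fract ((z : ℚ) / (n : ℚ) ^ t) := by
  have : NeZero (n ^ t) := ⟨pow_ne_zero t hn⟩
  have hval : ((z : ZMod (n ^ t)).val : ℚ) = ((z % (n ^ t : ℕ) : ℤ) : ℚ) := by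
    exact_mod_cast ZMod.val_intCast z
  rw [hval, ← Nat.cast_pow, Int.fract_div_intCast_eq_div_intCast_mod]

theorem znMem_intCast {f : ℕ → ℤ} (hf : ∀ k l, k ≤ l → (n : ℤ) ^ k ∣ f l - f k) :
    ZnMem n fun t => (f t : ZMod (n ^ t)) := by
  intro k l hkl
  rw [map_intCast, eq_comm, ZMod.intCast_eq_intCast_iff_dvd_sub]
  exact_mod_cast hf k l hkl

theorem mem_LSet_of_absorbedBy (hn : n ≠ 0) (hX : AbsorbedBy n X Q) {b : ∀ l, ZMod (n ^ l)}
    (hb : ZnMem n b) (hbX : ∀ t, ((b t).val : ℚ) / (n : ℚ) ^ t ∈ X) : b ∈ LSet n Q := by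
  obtain ⟨K, hK⟩ := hX
  refine ⟨hb, fun t _ => ⟨_, hK _ (hbX (t + K)), by positivity, ?_⟩⟩
  have : NeZero (n ^ (t + K)) := ⟨pow_ne_zero _ hn⟩
  have hreduce : (((b (t + K)).val : ℤ) : ZMod (n ^ t)) = b t := by
    rw [← hb t (t + K) (Nat.le_add_right t K), ZMod.castHom_apply, ZMod.cast_eq_val,
      Int.cast_natCast]
  rw [← hreduce, val_intCast_div_pow_eq_fract hn, pow_add (n : ℚ), Int.cast_natCast]
  congr 1
  field_simp

/-- The sequence represents the idempotent of `ℤ_{uv} = ℤ_u × ℤ_v` that is `0` in `ℤ_u` and `1`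
in `ℤ_v`. -/
theorem exists_forall_pow_dvd_and_pow_dvd_sub_one {u v : ℤ} (huv : IsCoprime u v) :
    ∃ e : ℕ → ℤ, (∀ t, u ^ t ∣ e t) ∧ ∀ t, v ^ t ∣ e t - 1 := by
  have hbezout (t : ℕ) : ∃ x y : ℤ, x * u ^ t + y * v ^ t = 1 := huv.pow
  choose x y hxy using hbezout
  exact ⟨fun t => x t * u ^ t, fun t => dvd_mul_left _ _,
    fun t => ⟨-y t, by linear_combination hxy t⟩⟩

theorem setOf_inH_subset_SIdeal_LSet {u v : ℕ} (hu : u ≠ 0) (hv : v ≠ 0)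
    (huv : u.Coprime v) (hQ : AbsorbedBy (u * v) {x | inH v x} Q) :
    {x | inH v x} ⊆ SIdeal (u * v) (LSet (u * v) Q) := by
  rintro _ ⟨w, s, rfl⟩
  have hcop : IsCoprime (u : ℤ) v := Nat.isCoprime_iff_coprime.mpr huv
  obtain ⟨e, heu, hev⟩ := exists_forall_pow_dvd_and_pow_dvd_sub_one hcop
  set z : ℤ := |w| * u ^ s with hz
  have hcompat (k l : ℕ) (hkl : k ≤ l) : ((u * v : ℕ) : ℤ) ^ k ∣ z * e l - z * e k := by
    rw [← mul_sub, Nat.cast_mul, mul_pow]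
    refine dvd_mul_of_dvd_right (hcop.pow.mul_dvd ?_ ?_) z
    · exact dvd_sub ((pow_dvd_pow _ hkl).trans (heu l)) (heu k)
    · simpa using dvd_sub ((pow_dvd_pow _ hkl).trans (hev l)) (hev k)
  have hb : (fun t => ((z * e t : ℤ) : ZMod ((u * v) ^ t))) ∈ LSet (u * v) Q := by
    refine mem_LSet_of_absorbedBy (mul_ne_zero hu hv) hQ (znMem_intCast hcompat) fun t => ?_
    obtain ⟨c, hc⟩ := heu t
    rw [val_intCast_div_pow_eq_fract (mul_ne_zero hu hv)]
    refine inH.fract hv ⟨z * c, t, ?_⟩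
    rw [hc]
    push_cast [mul_pow]
    field_simp
  refine ⟨⟨w * u ^ s, s, ?_⟩, s, ⟨w * u ^ s, ?_⟩, _, hb, ?_⟩
  · push_cast [mul_pow]
    field_simp
  · push_cast [mul_pow]
    field_simp
  · obtain ⟨g, hg⟩ : ((u * v : ℕ) : ℤ) ^ s ∣ z * e s - z := by
      obtain ⟨c, hc⟩ := hev s
      exact ⟨|w| * c, by rw [hz]; push_cast; linear_combination (|w| * (u : ℤ) ^ s) * hc⟩
    have hgQ : ((z * e s : ℤ) : ℚ) = |(w : ℚ)| * u ^ s + (u * v : ℕ) ^ s * g := by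
      rw [eq_add_of_sub_eq' hg, hz]
      push_cast
      rfl
    rw [val_intCast_div_pow_eq_fract (mul_ne_zero hu hv), hgQ, ← Int.fract_add_intCast _ g, abs_div,
      abs_of_nonneg (by positivity : (0 : ℚ) ≤ (v : ℚ) ^ s)]
    congr 1
    push_cast [mul_pow]
    field_simp

end AdicIntegers

theorem subset_SIdeal_LSet_general (n : ℕ) (hn : 2 ≤ n) (Q : Set ℚ) (hQconf : Confining n Q) :
    ∃ k : ℕ, ∀ a ∈ Q, (n : ℚ) ^ k * a ∈ SIdeal n (LSet n Q) := by
  have hn₀ : n ≠ 0 := by lia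
  obtain ⟨u, v, huv, rfl, hbounded, habsorbed⟩ := hQconf.exists_coprime_factorization hn hn₀
  obtain ⟨hu, hv⟩ := mul_ne_zero_iff.mp hn₀
  exact (hbounded.absorbedBy hv huv hQconf.1).mono_right
    (setOf_inH_subset_SIdeal_LSet hu hv huv habsorbed)

/-- If `Q ⊆ H = ℤ[1/n]` is a symmetric confining subset under `α : x ↦ n·x`, then
there is `k ≥ 0` with `Q ⊆ α^{-k}(S(L(Q)))`, i.e. `n^k·a ∈ S(L(Q))` for all `a ∈ Q`. -/
theorem subset_SIdeal_LSet (n : ℕ) (hn : 2 ≤ n) (Q : Set ℚ)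
    (hQsymm : IsSymmSet Q) (hQconf : Confining n Q) :
    ∃ k : ℕ, ∀ a ∈ Q, (n : ℚ) ^ k * a ∈ SIdeal n (LSet n Q) := by
  exact subset_SIdeal_LSet_general n hn Q hQconf
end

section
/- Fix an integer n ≥ 2 and let H = ℤ[1/n]. For every ideal 𝔞 of the ring ℤ_n of n-adic integers, the set S(𝔞) is an additive subgroup of H: it contains 0 and is closed under addition and negation. -/
/-!
Let `S_s` be the set of fractions `m / n^s` such that `m mod n^s` is the `s`-th coordinate of an
element of `𝔞`; it is an additive subgroup of `ℚ`. Compatibility of the coordinates, together with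
`m / n^s = n m / n^(s+1)`, gives `S_s ⊆ S_(s+1)`. As `S_s = -S_s`, the absolute value in the
definition of `S(𝔞)` is immaterial, so `S(𝔞)` is the increasing union of the groups `S_s`.
-/

theorem fract_intCast_div_natCast_eq_val_div_iff {k : Type*} [Field k] [LinearOrder k]
    [IsStrictOrderedRing k] [FloorRing k] {N : ℕ} [NeZero N] (m : ℤ) (c : ZMod N) :
    Int.fract ((m : k) / N) = (c.val : k) / N ↔ c = m := by
  have hN : (N : k) ≠ 0 := NeZero.ne _
  rw [Int.fract_div_intCast_eq_div_intCast_mod, div_left_inj' hN, ← ZMod.val_intCast,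
    Int.cast_natCast, Nat.cast_inj, (ZMod.val_injective N).eq_iff, eq_comm]

theorem natCast_mul_eq_of_castHom_eq {M N k : ℕ} (hMN : M ∣ N) (hN : N ∣ M * k) {c d : ZMod N}
    (h : ZMod.castHom hMN (ZMod M) c = ZMod.castHom hMN (ZMod M) d) :
    (k : ZMod N) * c = k * d := by
  obtain ⟨a, rfl⟩ := ZMod.intCast_surjective c
  obtain ⟨b, rfl⟩ := ZMod.intCast_surjective d
  have hM : (M : ℤ) ∣ b - a := by
    rwa [map_intCast, map_intCast, ZMod.intCast_eq_intCast_iff_dvd_sub] at h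
  have hNk : (N : ℤ) ∣ k * b - k * a :=
    calc (N : ℤ) ∣ M * k := mod_cast hN
      _ ∣ (b - a) * k := mul_dvd_mul_right hM _
      _ = k * b - k * a := by ring
  exact mod_cast (ZMod.intCast_eq_intCast_iff_dvd_sub (k * a) (k * b) N).mpr hNk

theorem IsZnIdeal.neg_mem {n : ℕ} {I : Set (∀ l : ℕ, ZMod (n ^ l))} (hI : IsZnIdeal n I)
    {b : ∀ l : ℕ, ZMod (n ^ l)} (hb : b ∈ I) : -b ∈ I := by
  have neg_one_mem : ZnMem n (-1) := fun k l h ↦ by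
    simp only [Pi.neg_apply, Pi.one_apply, map_neg, map_one]
  simpa only [neg_one_mul] using hI.2.2.2 (-1) neg_one_mem b hb

/-- The additive group underlying an ideal of `ℤ_n`, as a subgroup of `∏ l, ℤ/n^lℤ`. -/
def IsZnIdeal.toAddSubgroup {n : ℕ} {I : Set (∀ l : ℕ, ZMod (n ^ l))} (hI : IsZnIdeal n I) :
    AddSubgroup (∀ l : ℕ, ZMod (n ^ l)) where
  carrier := I
  zero_mem' := hI.2.1
  add_mem' hx hy := hI.2.2.1 _ hx _ hy
  neg_mem' := hI.neg_mem

section SLevel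

variable {n : ℕ} (A : AddSubgroup (∀ l : ℕ, ZMod (n ^ l)))

/-- The group of fractions `m / n^s` with `m` an integer whose class modulo `n^s` is the `s`-th
coordinate of an element of `A`; `S(A)` is the union of these groups. -/
def SLevel (s : ℕ) : AddSubgroup ℚ :=
  ((A.map (Pi.evalAddMonoidHom _ s)).comap (Int.castAddHom (ZMod (n ^ s)))).map
    ((AddMonoidHom.mulRight ((n : ℚ) ^ s)⁻¹).comp (Int.castAddHom ℚ))

variable {A}

theorem mem_SLevel {s : ℕ} {x : ℚ} :
    x ∈ SLevel A s ↔ ∃ m : ℤ, (∃ b ∈ A, b s = m) ∧ (m : ℚ) / (n : ℚ) ^ s = x :=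
  Iff.rfl

theorem SLevel_mono [NeZero n] (hA : ∀ b ∈ A, ZnMem n b) : Monotone (SLevel A) := by
  refine monotone_nat_of_le_succ fun s x hx ↦ ?_
  obtain ⟨m, ⟨b, hb, hbm⟩, rfl⟩ := mem_SLevel.mp hx
  have hcast : ZMod.castHom (pow_dvd_pow n s.le_succ) (ZMod (n ^ s)) (b (s + 1)) =
      ZMod.castHom (pow_dvd_pow n s.le_succ) (ZMod (n ^ s)) m := by
    rw [hA b hb s (s + 1) s.le_succ, hbm, map_intCast]
  refine mem_SLevel.mpr ⟨n * m, ⟨n • b, A.nsmul_mem hb n, ?_⟩, ?_⟩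
  · rw [Pi.smul_apply, nsmul_eq_mul, Int.cast_mul, Int.cast_natCast]
    exact natCast_mul_eq_of_castHom_eq _ (pow_succ n s).dvd hcast
  · have hn : (n : ℚ) ≠ 0 := NeZero.ne _
    rw [Int.cast_mul, Int.cast_natCast, pow_succ', mul_div_mul_left _ _ hn]

theorem mem_SLevel_iff_fract [NeZero n] {s : ℕ} {x : ℚ} :
    x ∈ SLevel A s ↔ (∃ m : ℤ, (n : ℚ) ^ s * x = m) ∧
      ∃ b ∈ A, Int.fract x = ((b s).val : ℚ) / (n : ℚ) ^ s := by
  have hn : (n : ℚ) ^ s ≠ 0 := pow_ne_zero s (NeZero.ne _)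
  have hfract (m : ℤ) (c : ZMod (n ^ s)) :
      Int.fract ((m : ℚ) / (n : ℚ) ^ s) = (c.val : ℚ) / (n : ℚ) ^ s ↔ c = m := by
    exact_mod_cast fract_intCast_div_natCast_eq_val_div_iff (k := ℚ) m c
  rw [mem_SLevel]
  constructor
  · rintro ⟨m, ⟨b, hb, hbm⟩, rfl⟩
    exact ⟨⟨m, mul_div_cancel₀ _ hn⟩, b, hb, (hfract m _).mpr hbm⟩
  · rintro ⟨⟨m, hm⟩, b, hb, hbx⟩
    obtain rfl : (m : ℚ) / (n : ℚ) ^ s = x := by rw [← hm, mul_div_cancel_left₀ _ hn]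
    exact ⟨m, ⟨b, hb, (hfract m _).mp hbx⟩, rfl⟩

theorem mem_SIdeal_iff_exists_mem_SLevel [NeZero n] {x : ℚ} :
    x ∈ SIdeal n A ↔ ∃ s, x ∈ SLevel A s := by
  constructor
  · rintro ⟨-, s, ⟨m, hm⟩, hfract⟩
    have habs : (n : ℚ) ^ s * |x| = (|m| : ℤ) := by
      rw [Int.cast_abs, ← hm, abs_mul, abs_of_nonneg (by positivity : (0 : ℚ) ≤ (n : ℚ) ^ s)]
    exact ⟨s, abs_mem_iff.mp (mem_SLevel_iff_fract.mpr ⟨⟨_, habs⟩, hfract⟩)⟩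
  · rintro ⟨s, hx⟩
    obtain ⟨m, -, hmx⟩ := mem_SLevel.mp hx
    exact ⟨⟨m, s, hmx.symm⟩, s, (mem_SLevel_iff_fract.mp hx).1,
      (mem_SLevel_iff_fract.mp (abs_mem_iff.mpr hx)).2⟩

theorem SIdeal_eq_coe_iSup_SLevel [NeZero n] (hA : ∀ b ∈ A, ZnMem n b) :
    SIdeal n A = (⨆ s, SLevel A s : AddSubgroup ℚ) := by
  ext x
  rw [mem_SIdeal_iff_exists_mem_SLevel, SetLike.mem_coe,
    AddSubgroup.mem_iSup_of_directed (SLevel_mono hA).directed_le]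

end SLevel

theorem SIdeal_addSubgroup_general (n : ℕ) [NeZero n] (A : AddSubgroup (∀ l : ℕ, ZMod (n ^ l)))
    (hA : ∀ b ∈ A, ZnMem n b) :
    (0 : ℚ) ∈ SIdeal n A ∧ (∀ x ∈ SIdeal n A, ∀ y ∈ SIdeal n A, x + y ∈ SIdeal n A) ∧
      (∀ x ∈ SIdeal n A, -x ∈ SIdeal n A) := by
  rw [SIdeal_eq_coe_iSup_SLevel hA]
  exact ⟨zero_mem _, fun _ hx _ hy ↦ add_mem hx hy, fun _ hx ↦ neg_mem hx⟩

/-- For every ideal `𝔞` of `ℤ_n`, the set `S(𝔞)` is an additive subgroup of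
`H = ℤ[1/n]`: it contains `0` and is closed under addition and negation. -/
theorem SIdeal_addSubgroup (n : ℕ) (hn : 2 ≤ n) (I : Set (∀ l : ℕ, ZMod (n ^ l)))
    (hI : IsZnIdeal n I) :
    (0 : ℚ) ∈ SIdeal n I ∧ (∀ x ∈ SIdeal n I, ∀ y ∈ SIdeal n I, x + y ∈ SIdeal n I) ∧
      (∀ x ∈ SIdeal n I, -x ∈ SIdeal n I) := by
  have : NeZero n := ⟨by omega⟩
  exact SIdeal_addSubgroup_general n hI.toAddSubgroup hI.1
end
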